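/- Let $U=\{1,\dots,n\}$ be a set of items, where item $a$ has utility $u_a\in\mathbb R$ and consideration probability $p_a\in(0,1]$, and let $1\le k\le n$. A length-$k$ ranking is a tuple $r=(r_1,\dots,r_k)$ of distinct items of $U$. For $C\subseteq U$ let $$\Pr\nolimits_{\mathrm{PL}}(r\mid C)=\prod_{t=1}^k\frac{\exp(u_{r_t})}{\sum_{b\in C\setminus\{r_1,\dots,r_{t-1}\}}\exp(u_b)}$$ if $\{r_1,\dots,r_k\}\subseteq C$, and $\Pr_{\mathrm{PL}}(r\mid C)=0$ otherwise. Let $$\Pr\nolimits_{\mathrm C}(C)=\frac1{z_{k,p}}\prod_{a\in C}p_a\prod_{b\in U\setminus C}(1-p_b)$$ if $|C|\ge k$, and $\Pr_{\mathrm C}(C)=0$ if $|C|<k$, where $z_{k,p}=\sum_{C\subseteq U,\,|C|\ge k}\prod_{a\in C}p_a\prod_{b\in U\setminus C}(1-p_b)$. The PL+C model (Plackett–Luce with consideration) assigns to a ranking $r$ the probability $\Pr_{\mathrm{PL+C}}(r)=\sum_{C\subseteq U}\Pr_{\mathrm C}(C)\Pr_{\mathrm{PL}}(r\mid C)$, and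 to a set $R$ of rankings the probability $\Pr_{\mathrm{PL+C}}(R)=\sum_{r\in R}\Pr_{\mathrm{PL+C}}(r)$. Let $R_{a\le\ell}$ be the set of length-$k$ rankings in which item $a$ is in one of the top $\ell$ positions. Consider two items $i,j\in U$ with $u_i>u_j$. If for some $\ell$ with $1\le\ell\le k$ and $\ell<n$ (that is, excluding only the degenerate case $\ell=k=n$, in which $R_{i\le\ell}$ and $R_{j\le\ell}$ both consist of all rankings) we have $\Pr_{\mathrm{PL+C}}(R_{i\le\ell})\le\Pr_{\mathrm{PL+C}}(R_{j\le\ell})$, then $p_i\le p_j$. -/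

import Mathlib

noncomputable section

/-- Weight of a consideration set `C`: each item `i` in `C` is considered (probability `p i`),
each item `j` outside is not (probability `1 - p j`). -/
def considerWeight (n : ℕ) (p : Fin n → ℝ) (C : Finset (Fin n)) : ℝ :=
  (∏ i ∈ C, p i) * ∏ j ∈ Cᶜ, (1 - p j)

/-- Normalizing constant `z_{k,p}`: total weight of the consideration sets of size at least `k`. -/
def zConst (n k : ℕ) (p : Fin n → ℝ) : ℝ :=
  ∑ C ∈ Finset.univ.filter (fun C : Finset (Fin n) => k ≤ C.card), considerWeight n p C

/-- Probability of the consideration set `C`, conditioned on `|C| ≥ k`. -/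
def prC (n k : ℕ) (p : Fin n → ℝ) (C : Finset (Fin n)) : ℝ :=
  if k ≤ C.card then considerWeight n p C / zConst n k p else 0

/-- Plackett–Luce probability of the length-`k` ranking `r` given the consideration set `C`.
A ranking is an injective map from positions `0, …, k - 1` to items. -/
def prPL (n k : ℕ) (u : Fin n → ℝ) (r : Fin k ↪ Fin n) (C : Finset (Fin n)) : ℝ :=
  if ∀ t : Fin k, r t ∈ C then
    ∏ t : Fin k, Real.exp (u (r t)) /
      ∑ j ∈ C \ (Finset.Iio t).image r, Real.exp (u j)
  else 0

/-- Plackett–Luce-with-consideration (PL+C) probability of the ranking `r`. -/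
def prPLC (n k : ℕ) (u p : Fin n → ℝ) (r : Fin k ↪ Fin n) : ℝ :=
  ∑ C : Finset (Fin n), prC n k p C * prPL n k u r C

/-- PL+C probability of a set of rankings. -/
def prPLCset (n k : ℕ) (u p : Fin n → ℝ) (R : Finset (Fin k ↪ Fin n)) : ℝ :=
  ∑ r ∈ R, prPLC n k u p r

/-- `R_{i≤ℓ}`: the set of length-`k` rankings with item `i` among the top `ℓ` positions. -/
def topSet (n k : ℕ) (i : Fin n) (ℓ : ℕ) : Finset (Fin k ↪ Fin n) :=
  Finset.univ.filter (fun r => ∃ t : Fin k, (t : ℕ) < ℓ ∧ r t = i)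

end

/-!
Let `σ` be the transposition of `i` and `j`. Relabelling the items by `σ` turns the ranking
probability of `j` under the parameters `(u, p)` into that of `i` under `(u ∘ σ, p ∘ σ)`, so it
suffices to compare these two models for the single item `i`, one consideration set `C ∋ i` at a
time. Suppose `p j ≤ p i`. Then `C` is at most as likely under `p ∘ σ` as under `p`. Passing from
`u` to `u ∘ σ` lowers no weight but that of `i` and does not raise the total weight of `C`, so it
raises every factor in the Plackett–Luce probability of a sequence of `ℓ` draws that avoids `i`.
Since the first `ℓ` places of a Plackett–Luce ranking are themselves a Plackett–Luce ranking,
summing over these sequences shows that `i` is more likely to miss the top `ℓ` under `u ∘ σ`,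
strictly so when `C` consists of all items.
-/

open Finset Equiv

section Swap

variable {α M : Type*} [DecidableEq α] {i j : α}

theorem apply_swap_le [Preorder M] {f : α → M} (h : f j ≤ f i) {b : α} (hb : b ≠ j) :
    f (swap i j b) ≤ f b := by
  obtain rfl | hi := eq_or_ne b i
  · rwa [swap_apply_left]
  · rw [swap_apply_of_ne_of_ne hi hb]

theorem le_apply_swap [Preorder M] {f : α → M} (h : f j ≤ f i) {b : α} (hb : b ≠ i) :
    f b ≤ f (swap i j b) := by
  obtain rfl | hj := eq_or_ne b j
  · rwa [swap_apply_right]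
  · rw [swap_apply_of_ne_of_ne hb hj]

theorem support_swap_subset {s : Finset α} (hi : i ∈ s) (hj : j ∈ s) :
    {a | swap i j a ≠ a} ⊆ (s : Set α) := by
  intro a ha
  by_contra has
  exact ha (swap_apply_of_ne_of_ne (fun h => has (h ▸ hi)) (fun h => has (h ▸ hj)))

theorem sum_comp_swap_le [AddCommMonoid M] [PartialOrder M] [IsOrderedAddMonoid M] {f : α → M}
    (h : f j ≤ f i) {s : Finset α} (hi : i ∈ s) :
    ∑ a ∈ s, f (swap i j a) ≤ ∑ a ∈ s, f a := by
  by_cases hj : j ∈ s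
  · exact (Perm.sum_comp _ _ _ (support_swap_subset hi hj)).le
  · exact sum_le_sum fun a ha => apply_swap_le h (ne_of_mem_of_not_mem ha hj)

theorem prod_comp_swap_le [CommMonoidWithZero M] [PartialOrder M] [ZeroLEOneClass M] [PosMulMono M]
    {f : α → M} (hf : ∀ a, 0 ≤ f a) (h : f j ≤ f i) {s : Finset α} (hi : i ∈ s) :
    ∏ a ∈ s, f (swap i j a) ≤ ∏ a ∈ s, f a := by
  by_cases hj : j ∈ s
  · exact (Perm.prod_comp _ _ _ (support_swap_subset hi hj)).le
  · exact prod_le_prod (fun a _ => hf _)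
      fun a ha => apply_swap_le h (ne_of_mem_of_not_mem ha hj)

end Swap

section FiniteSums

variable {α M : Type*} [DecidableEq α]

theorem sum_sdiff_le_sum_sdiff [AddCommGroup M] [PartialOrder M] [IsOrderedAddMonoid M]
    {f g : α → M} {s t : Finset α} (hs : ∑ a ∈ s, g a ≤ ∑ a ∈ s, f a)
    (ht : ∀ a ∈ t, f a ≤ g a) : ∑ a ∈ s \ t, g a ≤ ∑ a ∈ s \ t, f a := by
  have hinter : ∑ a ∈ s ∩ t, f a ≤ ∑ a ∈ s ∩ t, g a :=
    sum_le_sum fun a ha => ht a (mem_of_mem_inter_right ha)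
  rw [eq_sub_of_add_eq' (sum_inter_add_sum_sdiff s t f),
    eq_sub_of_add_eq' (sum_inter_add_sum_sdiff s t g)]
  exact sub_le_sub hs hinter

theorem sum_embedding_fin_succ [AddCommMonoid M] [Fintype α] {k : ℕ}
    (G : (Fin k ↪ α) → α → M) :
    ∑ r : Fin (k + 1) ↪ α, G (Fin.Embedding.init r) (r (Fin.last k)) =
      ∑ e : Fin k ↪ α, ∑ a ∈ (univ.image e)ᶜ, G e a := by
  rw [← sum_fiberwise univ Fin.Embedding.init]
  refine sum_congr rfl fun e _ => ?_
  refine sum_nbij (fun r => r (Fin.last k)) ?_ ?_ ?_ ?_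
  · intro r hr
    obtain rfl : Fin.Embedding.init r = e := by simpa using hr
    have hlast (t : Fin k) : Fin.Embedding.init r t ≠ r (Fin.last k) :=
      r.injective.ne (Fin.castSucc_lt_last t).ne
    simpa using hlast
  · intro r hr s hs hlast
    obtain rfl : Fin.Embedding.init r = e := by simpa using hr
    have hinit : Fin.Embedding.init s = Fin.Embedding.init r := by simpa using hs
    refine DFunLike.ext _ _ (Fin.lastCases hlast fun t => ?_)
    exact (DFunLike.congr_fun hinit t).symm
  · intro a ha
    have hrange : a ∉ Set.range e := by simpa using ha
    exact ⟨Fin.Embedding.snoc e hrange, by simp [Fin.Embedding.init_snoc],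
      Fin.Embedding.snoc_last⟩
  · intro r hr
    obtain rfl : Fin.Embedding.init r = e := by simpa using hr
    rfl

end FiniteSums

theorem exists_embedding_fin_of_mem {α : Type*} {ℓ : ℕ} (hℓ : 1 ≤ ℓ) {s : Finset α}
    (hs : ℓ ≤ s.card) {b : α} (hb : b ∈ s) : ∃ r : Fin ℓ ↪ α, (∀ t, r t ∈ s) ∧ ∃ t, r t = b := by
  obtain ⟨v, hbv, hvs, hv⟩ :=
    exists_subsuperset_card_eq (singleton_subset_iff.mpr hb) (by simpa using hℓ) hs
  let e : Fin ℓ ≃ v := (v.equivFinOfCardEq hv).symm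
  exact ⟨e.toEmbedding.trans (.subtype _), fun t => hvs (e t).2,
    e.symm ⟨b, singleton_subset_iff.mp hbv⟩, by simp⟩

section PlackettLuce

variable {n k ℓ : ℕ} {u v : Fin n → ℝ} {a : Fin n} {C : Finset (Fin n)}

theorem prPL_nonneg (u : Fin n → ℝ) (r : Fin k ↪ Fin n) (C : Finset (Fin n)) :
    0 ≤ prPL n k u r C := by
  unfold prPL
  positivity

theorem prPL_succ (u : Fin n → ℝ) (r : Fin (k + 1) ↪ Fin n) (C : Finset (Fin n)) :
    prPL n (k + 1) u r C = prPL n k u (Fin.Embedding.init r) C *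
      if r (Fin.last k) ∈ C then Real.exp (u (r (Fin.last k))) /
        ∑ j ∈ C \ univ.image (Fin.Embedding.init r), Real.exp (u j) else 0 := by
  have himage (t : Fin k) :
      (Iio t.castSucc).image r = (Iio t).image (Fin.Embedding.init r) := by
    rw [← Fin.map_castSuccEmb_Iio, map_eq_image, image_image]
    rfl
  have hlast : (Iio (Fin.last k)).image r = univ.image (Fin.Embedding.init r) := by
    rw [Fin.Iio_last_eq_map, map_eq_image, image_image]
    rfl
  simp only [prPL, Fin.forall_fin_succ', Fin.prod_univ_castSucc, himage, hlast,
    ite_zero_mul_ite_zero]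
  rfl

theorem sum_exp_sdiff_prefix_pos {r : Fin k ↪ Fin n} {t : Fin k} (ht : r t ∈ C) :
    0 < ∑ j ∈ C \ (Iio t).image r, Real.exp (u j) :=
  sum_pos (fun _ _ => Real.exp_pos _) ⟨r t, by simp [ht]⟩

theorem sum_mul_prPL_succ (hk : k < C.card) (F : (Fin k ↪ Fin n) → ℝ) :
    ∑ r : Fin (k + 1) ↪ Fin n, F (Fin.Embedding.init r) * prPL n (k + 1) u r C =
      ∑ e : Fin k ↪ Fin n, F e * prPL n k u e C := by
  simp only [prPL_succ]
  rw [sum_embedding_fin_succ fun e a => F e * (prPL n k u e C *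
    if a ∈ C then Real.exp (u a) / ∑ j ∈ C \ univ.image e, Real.exp (u j) else 0)]
  refine sum_congr rfl fun e _ => ?_
  have hnonempty : (C \ univ.image e).Nonempty := by
    rw [← card_pos]
    have := le_card_sdiff (univ.image e) C
    rw [card_image_of_injective _ e.injective, card_fin] at this
    omega
  have hpos : 0 < ∑ j ∈ C \ univ.image e, Real.exp (u j) :=
    sum_pos (fun _ _ => Real.exp_pos _) hnonempty
  rw [← mul_sum, ← mul_sum, sum_ite_mem, inter_comm, ← sdiff_eq_inter_compl, ← sum_div,
    div_self hpos.ne', mul_one]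

theorem sum_mul_prPL_prefix (hℓk : ℓ ≤ k) (hk : k ≤ C.card) (F : (Fin ℓ ↪ Fin n) → ℝ) :
    ∑ r : Fin k ↪ Fin n, F ((Fin.castLEEmb hℓk).trans r) * prPL n k u r C =
      ∑ s : Fin ℓ ↪ Fin n, F s * prPL n ℓ u s C := by
  induction k, hℓk using Nat.le_induction with
  | base => rfl
  | succ k hℓk ih =>
    rw [← ih (Nat.le_of_succ_le hk), ← sum_mul_prPL_succ hk]
    rfl

theorem sum_prPL (hk : k ≤ C.card) : ∑ r : Fin k ↪ Fin n, prPL n k u r C = 1 := by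
  have h := sum_mul_prPL_prefix (u := u) k.zero_le hk fun _ => 1
  simpa [prPL] using h

/-- The Plackett–Luce probability, given the consideration set `C`, that item `a` is in one of the
top `ℓ` positions of a length-`k` ranking. -/
noncomputable def prTop (n k : ℕ) (u : Fin n → ℝ) (a : Fin n) (ℓ : ℕ) (C : Finset (Fin n)) : ℝ :=
  ∑ r ∈ topSet n k a ℓ, prPL n k u r C

theorem prTop_nonneg : 0 ≤ prTop n k u a ℓ C :=
  sum_nonneg fun _ _ => prPL_nonneg _ _ _

theorem prTop_eq_zero (ha : a ∉ C) : prTop n k u a ℓ C = 0 := by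
  refine sum_eq_zero fun r hr => if_neg fun hC => ?_
  obtain ⟨t, -, rfl⟩ := (mem_filter.mp hr).2
  exact ha (hC t)

theorem prTop_eq_one_sub (hℓk : ℓ ≤ k) (hk : k ≤ C.card) :
    prTop n k u a ℓ C = 1 - ∑ s : Fin ℓ ↪ Fin n with ∀ t, s t ≠ a, prPL n ℓ u s C := by
  have hprefix : prTop n k u a ℓ C = ∑ s : Fin ℓ ↪ Fin n with ∃ t, s t = a, prPL n ℓ u s C := by
    have hiff (r : Fin k ↪ Fin n) : (∃ t, ((Fin.castLEEmb hℓk).trans r) t = a) ↔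
        ∃ t : Fin k, (t : ℕ) < ℓ ∧ r t = a :=
      ⟨fun ⟨t, ht⟩ => ⟨_, t.2, ht⟩, fun ⟨t, htℓ, ht⟩ => ⟨⟨t, htℓ⟩, ht⟩⟩
    have h := sum_mul_prPL_prefix (u := u) hℓk hk fun s => if ∃ t, s t = a then 1 else 0
    simpa only [prTop, topSet, hiff, ite_mul, one_mul, zero_mul, sum_filter] using h
  rw [hprefix, eq_sub_iff_add_eq, ← sum_prPL (u := u) (hℓk.trans hk),
    ← sum_filter_add_sum_filter_not univ (fun s : Fin ℓ ↪ Fin n => ∃ t, s t = a)]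
  simp only [not_exists, ne_eq]

theorem sum_exp_sdiff_prefix_le (h : ∀ b ≠ a, u b ≤ v b)
    (hC : ∑ b ∈ C, Real.exp (v b) ≤ ∑ b ∈ C, Real.exp (u b)) {r : Fin k ↪ Fin n}
    (hr : ∀ t, r t ≠ a) (t : Fin k) :
    ∑ b ∈ C \ (Iio t).image r, Real.exp (v b) ≤ ∑ b ∈ C \ (Iio t).image r, Real.exp (u b) :=
  sum_sdiff_le_sum_sdiff hC <| forall_mem_image.mpr fun s _ => Real.exp_le_exp.mpr (h _ (hr s))

theorem prPL_le_prPL (h : ∀ b ≠ a, u b ≤ v b)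
    (hC : ∑ b ∈ C, Real.exp (v b) ≤ ∑ b ∈ C, Real.exp (u b)) {r : Fin k ↪ Fin n}
    (hr : ∀ t, r t ≠ a) : prPL n k u r C ≤ prPL n k v r C := by
  unfold prPL
  split_ifs with hrC
  · refine prod_le_prod (fun t _ => by positivity) fun t _ => ?_
    exact div_le_div₀ (Real.exp_pos _).le (Real.exp_le_exp.mpr (h _ (hr t)))
      (sum_exp_sdiff_prefix_pos (hrC t)) (sum_exp_sdiff_prefix_le h hC hr t)
  · rfl

theorem prPL_lt_prPL (h : ∀ b ≠ a, u b ≤ v b)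
    (hC : ∑ b ∈ C, Real.exp (v b) ≤ ∑ b ∈ C, Real.exp (u b)) {r : Fin k ↪ Fin n}
    (hr : ∀ t, r t ≠ a) (hrC : ∀ t, r t ∈ C) (hlt : ∃ t, u (r t) < v (r t)) :
    prPL n k u r C < prPL n k v r C := by
  obtain ⟨t₀, ht₀⟩ := hlt
  rw [prPL, prPL, if_pos hrC, if_pos hrC]
  refine prod_lt_prod (fun t _ => ?_) (fun t _ => ?_) ⟨t₀, mem_univ _, ?_⟩
  · exact div_pos (Real.exp_pos _) (sum_exp_sdiff_prefix_pos (hrC t))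
  · exact div_le_div₀ (Real.exp_pos _).le (Real.exp_le_exp.mpr (h _ (hr t)))
      (sum_exp_sdiff_prefix_pos (hrC t)) (sum_exp_sdiff_prefix_le h hC hr t)
  · exact div_lt_div₀ (Real.exp_lt_exp.mpr ht₀) (sum_exp_sdiff_prefix_le h hC hr t₀)
      (Real.exp_pos _).le (sum_exp_sdiff_prefix_pos (hrC t₀))

theorem prTop_le_prTop (hℓk : ℓ ≤ k) (hk : k ≤ C.card) (h : ∀ b ≠ a, u b ≤ v b)
    (hC : ∑ b ∈ C, Real.exp (v b) ≤ ∑ b ∈ C, Real.exp (u b)) :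
    prTop n k v a ℓ C ≤ prTop n k u a ℓ C := by
  rw [prTop_eq_one_sub hℓk hk, prTop_eq_one_sub hℓk hk]
  exact sub_le_sub_left (sum_le_sum fun s hs => prPL_le_prPL h hC (mem_filter.mp hs).2) 1

theorem prTop_lt_prTop (hℓ : 1 ≤ ℓ) (hℓk : ℓ ≤ k) (hk : k ≤ C.card) (hℓC : ℓ < C.card)
    (h : ∀ b ≠ a, u b ≤ v b) (hC : ∑ b ∈ C, Real.exp (v b) ≤ ∑ b ∈ C, Real.exp (u b))
    (hlt : ∃ b ∈ C, b ≠ a ∧ u b < v b) :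
    prTop n k v a ℓ C < prTop n k u a ℓ C := by
  obtain ⟨b, hbC, hba, hb⟩ := hlt
  have hcard : ℓ ≤ (C.erase a).card := by
    have := pred_card_le_card_erase (s := C) (a := a)
    omega
  obtain ⟨s, hsC, t, rfl⟩ := exists_embedding_fin_of_mem hℓ hcard (mem_erase.mpr ⟨hba, hbC⟩)
  have hsa (t : Fin ℓ) : s t ≠ a := ne_of_mem_erase (hsC t)
  rw [prTop_eq_one_sub hℓk hk, prTop_eq_one_sub hℓk hk]
  refine sub_lt_sub_left (sum_lt_sum (fun s hs => prPL_le_prPL h hC (mem_filter.mp hs).2)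
    ⟨s, by simpa using hsa, ?_⟩) 1
  exact prPL_lt_prPL h hC hsa (fun t => mem_of_mem_erase (hsC t)) ⟨t, hb⟩

end PlackettLuce

section Relabelling

variable {n k : ℕ} (u p : Fin n → ℝ) (σ : Perm (Fin n)) (C : Finset (Fin n))

theorem considerWeight_comp_perm :
    considerWeight n (p ∘ σ) C = considerWeight n p (σ.finsetCongr C) := by
  have hcompl : (C.map σ.toEmbedding)ᶜ = Cᶜ.map σ.toEmbedding := by
    ext b
    simp [mem_map_equiv]
  simp [considerWeight, hcompl]

theorem zConst_comp_perm : zConst n k (p ∘ σ) = zConst n k p :=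
  sum_equiv σ.finsetCongr (by simp) fun C _ => considerWeight_comp_perm p σ C

theorem prC_comp_perm : prC n k (p ∘ σ) C = prC n k p (σ.finsetCongr C) := by
  simp [prC, zConst_comp_perm, considerWeight_comp_perm]

theorem prPL_comp_perm (r : Fin k ↪ Fin n) :
    prPL n k (u ∘ σ) r C = prPL n k u (r.trans σ.toEmbedding) (σ.finsetCongr C) := by
  have hsdiff (t : Fin k) : C.map σ.toEmbedding \ (Iio t).image (r.trans σ.toEmbedding) =
      (C \ (Iio t).image r).map σ.toEmbedding := by
    ext b
    simp [mem_map_equiv, eq_symm_apply]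
  simp [prPL, hsdiff]

theorem prPLC_comp_perm (r : Fin k ↪ Fin n) :
    prPLC n k (u ∘ σ) (p ∘ σ) r = prPLC n k u p (r.trans σ.toEmbedding) := by
  simp only [prPLC, prC_comp_perm, prPL_comp_perm]
  exact σ.finsetCongr.sum_comp fun C => prC n k p C * prPL n k u (r.trans σ.toEmbedding) C

theorem prPLCset_topSet_comp_perm (a : Fin n) (ℓ : ℕ) :
    prPLCset n k (u ∘ σ) (p ∘ σ) (topSet n k a ℓ) = prPLCset n k u p (topSet n k (σ a) ℓ) :=
  sum_equiv (embeddingCongr (.refl _) σ) (by simp [topSet]) fun r _ => prPLC_comp_perm u p σ r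

end Relabelling

section Consideration

variable {n k ℓ : ℕ} {u p : Fin n → ℝ} {i j : Fin n} {C : Finset (Fin n)}

theorem considerWeight_nonneg (hp : ∀ a, p a ∈ Set.Icc 0 1) (C : Finset (Fin n)) :
    0 ≤ considerWeight n p C :=
  mul_nonneg (prod_nonneg fun a _ => (hp a).1) (prod_nonneg fun a _ => sub_nonneg.mpr (hp a).2)

theorem zConst_nonneg (hp : ∀ a, p a ∈ Set.Icc 0 1) : 0 ≤ zConst n k p :=
  sum_nonneg fun C _ => considerWeight_nonneg hp C

theorem prC_nonneg (hp : ∀ a, p a ∈ Set.Icc 0 1) (C : Finset (Fin n)) : 0 ≤ prC n k p C := by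
  unfold prC
  split_ifs
  · exact div_nonneg (considerWeight_nonneg hp C) (zConst_nonneg hp)
  · rfl

theorem prC_univ_pos (hp : ∀ a, p a ∈ Set.Ioc 0 1) (hkn : k ≤ n) : 0 < prC n k p univ := by
  have hweight : 0 < considerWeight n p univ := by
    simpa [considerWeight] using prod_pos fun a (_ : a ∈ univ) => (hp a).1
  have hz : 0 < zConst n k p := hweight.trans_le <|
    single_le_sum (f := considerWeight n p)
      (fun C _ => considerWeight_nonneg (fun a => Set.Ioc_subset_Icc_self (hp a)) C)
      (by simpa using hkn)
  rw [prC, if_pos (by simpa using hkn)]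
  exact div_pos hweight hz

theorem considerWeight_comp_swap_le (hp : ∀ a, p a ∈ Set.Icc 0 1) (hij : p j ≤ p i) (hi : i ∈ C) :
    considerWeight n (p ∘ swap i j) C ≤ considerWeight n p C := by
  refine mul_le_mul (prod_comp_swap_le (fun a => (hp a).1) hij hi) ?_
    (prod_nonneg fun b _ => sub_nonneg.mpr (hp _).2) (prod_nonneg fun a _ => (hp a).1)
  refine prod_le_prod (fun b _ => sub_nonneg.mpr (hp _).2) fun b hb => ?_
  exact sub_le_sub_left (le_apply_swap hij (ne_of_mem_of_not_mem hi (mem_compl.mp hb)).symm) 1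

theorem prC_comp_swap_le (hp : ∀ a, p a ∈ Set.Icc 0 1) (hij : p j ≤ p i) (hi : i ∈ C) :
    prC n k (p ∘ swap i j) C ≤ prC n k p C := by
  unfold prC
  split_ifs
  · rw [zConst_comp_perm]
    exact div_le_div_of_nonneg_right (considerWeight_comp_swap_le hp hij hi) (zConst_nonneg hp)
  · rfl

theorem prC_mul_prTop_comp_swap_le (hp : ∀ a, p a ∈ Set.Icc 0 1) (hu : u j ≤ u i)
    (hij : p j ≤ p i) (hℓk : ℓ ≤ k) (C : Finset (Fin n)) :
    prC n k (p ∘ swap i j) C * prTop n k (u ∘ swap i j) i ℓ C ≤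
      prC n k p C * prTop n k u i ℓ C := by
  by_cases hi : i ∈ C
  · by_cases hk : k ≤ C.card
    · exact mul_le_mul (prC_comp_swap_le hp hij hi)
        (prTop_le_prTop hℓk hk (fun b hb => le_apply_swap hu hb)
          (sum_comp_swap_le (f := fun b => Real.exp (u b)) (Real.exp_le_exp.mpr hu) hi))
        prTop_nonneg (prC_nonneg hp C)
    · simp [prC, hk]
  · simp [prTop_eq_zero hi]

theorem prC_mul_prTop_comp_swap_univ_lt (hp : ∀ a, p a ∈ Set.Ioc 0 1) (hu : u j < u i)
    (hij : p j ≤ p i) (hℓ : 1 ≤ ℓ) (hℓk : ℓ ≤ k) (hkn : k ≤ n) (hℓn : ℓ < n) :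
    prC n k (p ∘ swap i j) univ * prTop n k (u ∘ swap i j) i ℓ univ <
      prC n k p univ * prTop n k u i ℓ univ := by
  have hji : j ≠ i := fun h => hu.ne (congrArg u h)
  refine mul_lt_mul' (prC_comp_swap_le (fun a => Set.Ioc_subset_Icc_self (hp a)) hij (mem_univ i))
    ?_ prTop_nonneg (prC_univ_pos hp hkn)
  exact prTop_lt_prTop hℓ hℓk (by simpa using hkn) (by simpa using hℓn)
    (fun b hb => le_apply_swap hu.le hb)
    (sum_comp_swap_le (f := fun b => Real.exp (u b)) (Real.exp_le_exp.mpr hu.le) (mem_univ i))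
    ⟨j, mem_univ j, hji, by simpa using hu⟩

theorem prPLCset_topSet (u p : Fin n → ℝ) (a : Fin n) (ℓ : ℕ) :
    prPLCset n k u p (topSet n k a ℓ) = ∑ C, prC n k p C * prTop n k u a ℓ C := by
  simp only [prPLCset, prPLC, prTop, mul_sum]
  exact sum_comm

theorem consider_flip_general (hp : ∀ a, p a ∈ Set.Ioc 0 1) (hu : u j < u i) (hℓ : 1 ≤ ℓ)
    (hℓk : ℓ ≤ k) (hkn : k ≤ n) (hℓn : ℓ < n)
    (hflip : prPLCset n k u p (topSet n k i ℓ) ≤ prPLCset n k u p (topSet n k j ℓ)) :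
    p i < p j := by
  by_contra! hij
  refine hflip.not_gt ?_
  calc prPLCset n k u p (topSet n k j ℓ)
      = prPLCset n k (u ∘ swap i j) (p ∘ swap i j) (topSet n k i ℓ) := by
        rw [prPLCset_topSet_comp_perm, swap_apply_left]
    _ = ∑ C, prC n k (p ∘ swap i j) C * prTop n k (u ∘ swap i j) i ℓ C := prPLCset_topSet _ _ _ _
    _ < ∑ C, prC n k p C * prTop n k u i ℓ C :=
        sum_lt_sum (fun C _ => prC_mul_prTop_comp_swap_le
            (fun a => Set.Ioc_subset_Icc_self (hp a)) hu.le hij hℓk C)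
          ⟨univ, mem_univ _, prC_mul_prTop_comp_swap_univ_lt hp hu hij hℓ hℓk hkn hℓn⟩
    _ = prPLCset n k u p (topSet n k i ℓ) := (prPLCset_topSet _ _ _ _).symm

end Consideration

/-- If `u i > u j` but `i` appears in the top `ℓ` positions with at most the probability of `j`
under PL+C, then `p i ≤ p j`. Given `ℓ ≤ k ≤ n`, the hypothesis `ℓ < n` excludes only
`ℓ = k = n`, where `R_{i≤ℓ}` is the set of all rankings for every item `i`. -/
theorem consider_flip (n k ℓ : ℕ) (u p : Fin n → ℝ) (i j : Fin n)
    (hp : ∀ a, 0 < p a ∧ p a ≤ 1) (hu : u i > u j)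
    (hℓ : 1 ≤ ℓ) (hℓk : ℓ ≤ k) (hkn : k ≤ n) (hℓn : ℓ < n)
    (hflip : prPLCset n k u p (topSet n k i ℓ) ≤ prPLCset n k u p (topSet n k j ℓ)) :
    p i ≤ p j :=
  (consider_flip_general hp hu hℓ hℓk hkn hℓn hflip).le
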